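/- For every n ≥ 1 and every t ∈ ℝ, the recurrence coefficient β_n satisfies the extended relativistic Toda lattice equation β_n'(t) = p·β_n(t)·(α_n(t) − α_{n+1}(t)) + q·β_n(t)·( α_{n+1}(t)/(β_{n+1}(t)·β_n(t)) − α_n(t)/(β_n(t)·β_{n−1}(t)) ). -/

import Mathlib

open Polynomial

/-- The moment functional `L^{(t)}` applied to `x^m · P(x)`, where the moments are
`L^{(t)}[x^k] = ν k t`. -/
noncomputable def Lmom (ν : ℤ → ℝ → ℂ) (m : ℤ) (P : Polynomial ℂ) (t : ℝ) : ℂ :=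
  P.sum fun j c => c * ν (m + (j : ℤ)) t

/-!
Differentiating the orthogonality relations of `Q (n + 1)` in `t` shows that its time derivative, a
polynomial of degree at most `n`, has the same functionals `L[x⁻ʲ ·]`, `1 ≤ j ≤ n + 1`, as
`-(q αₙ₊₂ / βₙ₊₂) Qₙ - p αₙ₊₂ (Qₙ₊₁ - x Qₙ)`; such a polynomial is determined by these values.
Hence the constant coefficient `cₙ` of `Qₙ` satisfies `cₙ' = rₙ cₙ` with
`rₙ = q αₙ₊₁ / (βₙ₊₁ βₙ) - p αₙ₊₁`. The recurrence at `x = 0` reads `βₙ₊₁ = -cₙ₊₁ / cₙ`, so the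
logarithmic derivative of `βₙ₊₁` is `rₙ₊₁ - rₙ`, which is the Toda equation.
-/

section MomentFunctional

variable {R : Type*} [CommSemiring R]

/-- The functional `P ↦ L[x ^ m * P]` on polynomials, where `L` is the linear functional on Laurent
polynomials with moments `L[x ^ k] = μ k`. -/
noncomputable def momentFunctional (μ : ℤ → R) (m : ℤ) : R[X] →ₗ[R] R :=
  lsum fun j => LinearMap.toSpanSingleton R R (μ (m + j))

theorem Lmom_eq_momentFunctional (ν : ℤ → ℝ → ℂ) (m : ℤ) (P : ℂ[X]) (t : ℝ) :
    Lmom ν m P t = momentFunctional (ν · t) m P :=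
  rfl

variable (μ : ℤ → R) (m : ℤ)

theorem momentFunctional_monomial (k : ℕ) (a : R) :
    momentFunctional μ m (monomial k a) = a * μ (m + k) := by
  simp [momentFunctional, lsum_apply]

theorem momentFunctional_one : momentFunctional μ m 1 = μ m := by
  simpa using momentFunctional_monomial μ m 0 1

theorem momentFunctional_C_mul (c : R) (P : R[X]) :
    momentFunctional μ m (C c * P) = c * momentFunctional μ m P := by
  rw [C_mul', map_smul, smul_eq_mul]

theorem momentFunctional_X_mul (P : R[X]) :
    momentFunctional μ m (X * P) = momentFunctional μ (m + 1) P := by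
  induction P using Polynomial.induction_on' with
  | add P S hP hS => rw [mul_add, map_add, map_add, hP, hS]
  | monomial k a =>
    rw [X_mul_monomial, momentFunctional_monomial, momentFunctional_monomial, Nat.cast_succ,
      add_right_comm m 1, add_assoc]

theorem momentFunctional_eq_sum_range {P : R[X]} {n : ℕ} (hP : P.natDegree ≤ n) :
    momentFunctional μ m P = ∑ j ∈ Finset.range (n + 1), P.coeff j * μ (m + j) :=
  P.sum_over_range' (fun _ => map_zero _) (n + 1) (Nat.lt_succ_of_le hP)

end MomentFunctional

section TodaMomentField

variable {R : Type*} [CommRing R]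

/-- The right-hand side of the moment equation `ν_k' = -(p ν_{k+1} + q ν_{k-1})` of the extended
relativistic Toda lattice. -/
def todaMomentField (p q : R) (μ : ℤ → R) (k : ℤ) : R :=
  -(p * μ (k + 1) + q * μ (k - 1))

theorem momentFunctional_todaMomentField (p q : R) (μ : ℤ → R) (m : ℤ) (P : R[X]) :
    momentFunctional (todaMomentField p q μ) m P =
      -(p * momentFunctional μ (m + 1) P + q * momentFunctional μ (m - 1) P) := by
  induction P using Polynomial.induction_on' with
  | add P S hP hS => simp only [map_add, hP, hS]; ring
  | monomial k a =>
    simp only [momentFunctional_monomial, todaMomentField, add_right_comm m _ (k : ℤ),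
      sub_add_eq_add_sub]
    ring

end TodaMomentField

section LOrthogonality

variable {R : Type*} [CommRing R] {μ : ℤ → R} {Q : ℕ → R[X]} {β α : ℕ → R}

/-- `Q` is the sequence of monic L-orthogonal polynomials of the functional with moments `μ`. -/
structure IsMonicLOrthogonal (μ : ℤ → R) (Q : ℕ → R[X]) : Prop where
  monic (n : ℕ) : (Q n).Monic
  natDegree_eq (n : ℕ) : (Q n).natDegree = n
  orthogonal (n s : ℕ) (hs : s < n) : momentFunctional μ (-(n : ℤ) + s) (Q n) = 0

/-- The three-term recurrence of L-orthogonal polynomials. As in the paper, the first coefficients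
it involves are `β 1` and `α 2`. -/
structure SatisfiesLRecurrence (Q : ℕ → R[X]) (β α : ℕ → R) : Prop where
  zero : Q 0 = 1
  one : Q 1 = X - C (β 1)
  add_two (n : ℕ) :
    Q (n + 2) = (X - C (β (n + 2))) * Q (n + 1) - C (α (n + 2)) * (X * Q n)

theorem IsMonicLOrthogonal.degree_eq [Nontrivial R] (hQ : IsMonicLOrthogonal μ Q) (n : ℕ) :
    (Q n).degree = n := by
  rw [degree_eq_natDegree (hQ.monic n).ne_zero, hQ.natDegree_eq]

theorem IsMonicLOrthogonal.degree_sub_X_mul_lt [Nontrivial R] (hQ : IsMonicLOrthogonal μ Q)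
    (n : ℕ) : (Q (n + 1) - X * Q n).degree < ((n + 1 : ℕ) : WithBot ℕ) := by
  have hmonic : (X * Q n).Monic := monic_X.mul (hQ.monic n)
  have hdeg : (Q (n + 1)).degree = (X * Q n).degree := by
    rw [(hQ.monic n).degree_mul, degree_X, hQ.degree_eq, hQ.degree_eq, Nat.cast_succ, add_comm]
  have hlead : (Q (n + 1)).leadingCoeff = (X * Q n).leadingCoeff :=
    (hQ.monic _).leadingCoeff.trans hmonic.leadingCoeff.symm
  exact (degree_sub_lt_left hdeg (hQ.monic _).ne_zero hlead).trans_eq (hQ.degree_eq _)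

theorem IsMonicLOrthogonal.momentFunctional_neg_eq_zero (hQ : IsMonicLOrthogonal μ Q) {n j : ℕ}
    (hj : 1 ≤ j) (hjn : j ≤ n) : momentFunctional μ (-(j : ℤ)) (Q n) = 0 := by
  have h := hQ.orthogonal n (n - j) (by omega)
  rwa [Nat.cast_sub hjn, neg_add_eq_sub, sub_sub_cancel_left] at h

theorem IsMonicLOrthogonal.eq_zero_of_degree_lt [NoZeroDivisors R] (hQ : IsMonicLOrthogonal μ Q)
    (hne : ∀ n : ℕ, momentFunctional μ (-((n + 1 : ℕ) : ℤ)) (Q n) ≠ 0) {n : ℕ} {P : R[X]}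
    (hdeg : P.degree < n)
    (hP : ∀ j : ℕ, 1 ≤ j → j ≤ n → momentFunctional μ (-(j : ℤ)) P = 0) : P = 0 := by
  induction n generalizing P with
  | zero => simpa using hdeg
  | succ n ih =>
    have hP_eq : P = C (P.coeff n) * Q n := by
      rw [← sub_eq_zero]
      refine ih ((degree_lt_iff_coeff_zero _ _).2 fun j hj => ?_) fun j hj hjn => ?_
      · rw [coeff_sub, coeff_C_mul]
        rcases hj.eq_or_lt with rfl | hlt
        · have hlead : (Q n).coeff n = 1 := by
            simpa only [hQ.natDegree_eq] using (hQ.monic n).coeff_natDegree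
          rw [hlead, mul_one, sub_self]
        · rw [(degree_lt_iff_coeff_zero _ _).1 hdeg j hlt,
            coeff_eq_zero_of_natDegree_lt ((hQ.natDegree_eq n).trans_lt hlt), mul_zero, sub_zero]
      · rw [map_sub, momentFunctional_C_mul, hP j hj (by omega),
          hQ.momentFunctional_neg_eq_zero hj hjn, mul_zero, sub_zero]
    have hcoeff : P.coeff n = 0 := by
      have h := hP (n + 1) n.succ_pos le_rfl
      rw [hP_eq, momentFunctional_C_mul] at h
      exact (mul_eq_zero.1 h).resolve_right (hne n)
    rw [hP_eq, hcoeff, C_0, zero_mul]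

namespace SatisfiesLRecurrence

theorem coeff_zero_succ (hrec : SatisfiesLRecurrence Q β α) (n : ℕ) :
    (Q (n + 1)).coeff 0 = -β (n + 1) * (Q n).coeff 0 := by
  cases n with
  | zero => simp [hrec.zero, hrec.one]
  | succ n => simp [hrec.add_two, mul_coeff_zero]

theorem coeff_zero_ne_zero [IsDomain R] (hrec : SatisfiesLRecurrence Q β α)
    (hβ : ∀ n, β (n + 1) ≠ 0) (n : ℕ) : (Q n).coeff 0 ≠ 0 := by
  induction n with
  | zero => simp [hrec.zero]
  | succ n ih => exact hrec.coeff_zero_succ n ▸ mul_ne_zero (neg_ne_zero.2 (hβ n)) ih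

theorem momentFunctional_add_two (hrec : SatisfiesLRecurrence Q β α) (m : ℤ) (n : ℕ) :
    momentFunctional μ m (Q (n + 2)) =
      momentFunctional μ (m + 1) (Q (n + 1)) - β (n + 2) * momentFunctional μ m (Q (n + 1)) -
        α (n + 2) * momentFunctional μ (m + 1) (Q n) := by
  simp only [hrec.add_two, sub_mul, map_sub, momentFunctional_C_mul, momentFunctional_X_mul]

theorem momentFunctional_neg_add_one (hrec : SatisfiesLRecurrence Q β α)
    (hQ : IsMonicLOrthogonal μ Q) {n j : ℕ} (hj : 1 ≤ j) (hjn : j ≤ n + 1) :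
    momentFunctional μ (-(j : ℤ) + 1) (Q (n + 1)) =
      α (n + 2) * momentFunctional μ (-(j : ℤ) + 1) (Q n) := by
  have h := hrec.momentFunctional_add_two (μ := μ) (-(j : ℤ)) n
  rw [hQ.momentFunctional_neg_eq_zero hj hjn,
    hQ.momentFunctional_neg_eq_zero hj (by omega)] at h
  linear_combination -h

theorem beta_mul_momentFunctional_neg_sub_one (hrec : SatisfiesLRecurrence Q β α)
    (hQ : IsMonicLOrthogonal μ Q) {n j : ℕ} (hj : 1 ≤ j) (hjn : j ≤ n + 1) :
    β (n + 2) * momentFunctional μ (-(j : ℤ) - 1) (Q (n + 1)) =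
      -(α (n + 2) * momentFunctional μ (-(j : ℤ)) (Q n)) := by
  have h := hrec.momentFunctional_add_two (μ := μ) (-(j : ℤ) - 1) n
  have h_succ : momentFunctional μ (-(j : ℤ) - 1) (Q (n + 2)) = 0 := by
    rw [← neg_add', ← Nat.cast_succ]
    exact hQ.momentFunctional_neg_eq_zero j.succ_pos (by omega)
  rw [sub_add_cancel, h_succ, hQ.momentFunctional_neg_eq_zero hj hjn] at h
  linear_combination h

theorem momentFunctional_neg_succ_ne_zero [NoZeroDivisors R] (hrec : SatisfiesLRecurrence Q β α)
    (hQ : IsMonicLOrthogonal μ Q) (hμ : μ 0 ≠ 0) (hα : ∀ n, α (n + 2) ≠ 0) (n : ℕ) :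
    momentFunctional μ (-((n + 1 : ℕ) : ℤ)) (Q n) ≠ 0 := by
  induction n with
  | zero =>
    have h : momentFunctional μ (-1) (X * Q 0 - C (β 1) * Q 0) = 0 := by
      simpa [hrec.zero, hrec.one] using hQ.orthogonal 1 0 one_pos
    rw [map_sub, momentFunctional_X_mul, momentFunctional_C_mul, hrec.zero, momentFunctional_one,
      momentFunctional_one, neg_add_cancel, sub_eq_zero] at h
    rw [hrec.zero, momentFunctional_one]
    exact right_ne_zero_of_mul (h ▸ hμ :)
  | succ n ih =>
    have h := hrec.beta_mul_momentFunctional_neg_sub_one hQ n.succ_pos le_rfl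
    rw [Nat.cast_succ (n + 1), neg_add']
    exact right_ne_zero_of_mul (h ▸ neg_ne_zero.2 (mul_ne_zero (hα n) ih))

end SatisfiesLRecurrence

end LOrthogonality

section PolynomialCurves

variable {𝕜 A : Type*} [NontriviallyNormedField 𝕜] [NormedCommRing A] [NormedAlgebra 𝕜 A]
  {P : 𝕜 → A[X]} {P' : A[X]} {t : 𝕜} {n : ℕ}

/-- The curve of polynomials `P` has derivative `P'` at `t`, coefficient by coefficient. -/
def HasCoeffDerivAt (P : 𝕜 → A[X]) (P' : A[X]) (t : 𝕜) : Prop :=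
  ∀ j, HasDerivAt (fun s => (P s).coeff j) (P'.coeff j) t

theorem exists_hasCoeffDerivAt (hdeg : ∀ s, (P s).natDegree ≤ n)
    (hP : ∀ j, DifferentiableAt 𝕜 (fun s => (P s).coeff j) t) :
    ∃ P', HasCoeffDerivAt P P' t := by
  refine ⟨∑ j ∈ Finset.range (n + 1), monomial j (deriv (fun s => (P s).coeff j) t), fun j => ?_⟩
  refine (hP j).hasDerivAt.congr_deriv (Eq.symm ?_)
  simp only [finsetSum_coeff, coeff_monomial, Finset.sum_ite_eq', Finset.mem_range,
    ite_eq_left_iff, not_lt]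
  intro hj
  have hzero (s : 𝕜) : (P s).coeff j = 0 :=
    coeff_eq_zero_of_natDegree_lt ((hdeg s).trans_lt hj)
  simp only [hzero, deriv_const]

namespace HasCoeffDerivAt

theorem coeff_eq_zero (hP : HasCoeffDerivAt P P' t) {j : ℕ} {c : A}
    (hc : ∀ s, (P s).coeff j = c) : P'.coeff j = 0 :=
  (hP j).unique (by simpa only [hc] using hasDerivAt_const t c)

theorem natDegree_le (hP : HasCoeffDerivAt P P' t) (hdeg : ∀ s, (P s).natDegree ≤ n) :
    P'.natDegree ≤ n :=
  natDegree_le_iff_coeff_eq_zero.2 fun _ hj =>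
    hP.coeff_eq_zero fun s => coeff_eq_zero_of_natDegree_lt ((hdeg s).trans_lt hj)

theorem degree_lt_of_monic (hP : HasCoeffDerivAt P P' t) (hmonic : ∀ s, (P s).Monic)
    (hdeg : ∀ s, (P s).natDegree = n) : P'.degree < n := by
  refine (degree_lt_iff_coeff_zero _ _).2 fun j hj => ?_
  rcases hj.eq_or_lt with rfl | hlt
  · exact hP.coeff_eq_zero fun s => by simpa only [hdeg] using (hmonic s).coeff_natDegree
  · exact hP.coeff_eq_zero fun s => coeff_eq_zero_of_natDegree_lt ((hdeg s).trans_lt hlt)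

theorem hasDerivAt_momentFunctional {ν : ℤ → 𝕜 → A} {ν' : ℤ → A} (hP : HasCoeffDerivAt P P' t)
    (hν : ∀ k, HasDerivAt (ν k) (ν' k) t) (hdeg : ∀ s, (P s).natDegree ≤ n) (m : ℤ) :
    HasDerivAt (fun s => momentFunctional (ν · s) m (P s))
      (momentFunctional (ν · t) m P' + momentFunctional ν' m (P t)) t := by
  simp only [momentFunctional_eq_sum_range _ _ (hdeg _),
    momentFunctional_eq_sum_range _ _ (hP.natDegree_le hdeg), ← Finset.sum_add_distrib]
  exact HasDerivAt.fun_sum fun j _ => (hP j).mul (hν (m + j))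

theorem momentFunctional_neg_of_todaMomentField {p q : A} {ν : ℤ → 𝕜 → A} {Q : ℕ → 𝕜 → A[X]}
    (hP : HasCoeffDerivAt (Q n) P' t)
    (hν : ∀ k, HasDerivAt (ν k) (todaMomentField p q (ν · t) k) t)
    (hQ : ∀ s, IsMonicLOrthogonal (ν · s) (Q · s)) {j : ℕ} (hj : 1 ≤ j) (hjn : j ≤ n) :
    momentFunctional (ν · t) (-(j : ℤ)) P' =
      p * momentFunctional (ν · t) (-(j : ℤ) + 1) (Q n t) +
        q * momentFunctional (ν · t) (-(j : ℤ) - 1) (Q n t) := by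
  have hderiv := hP.hasDerivAt_momentFunctional hν (fun s => ((hQ s).natDegree_eq n).le) (-(j : ℤ))
  have hzero (s : 𝕜) : momentFunctional (ν · s) (-(j : ℤ)) (Q n s) = 0 :=
    (hQ s).momentFunctional_neg_eq_zero hj hjn
  simp only [hzero] at hderiv
  have hderiv_eq := hderiv.unique (hasDerivAt_const t 0)
  rw [momentFunctional_todaMomentField] at hderiv_eq
  linear_combination hderiv_eq

end HasCoeffDerivAt

end PolynomialCurves

section LOrthogonalFlow

variable {𝕜 K : Type*} [NontriviallyNormedField 𝕜] [NormedField K] [NormedAlgebra 𝕜 K]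
  {ν : ℤ → 𝕜 → K} {Q : ℕ → 𝕜 → K[X]}

theorem hasCoeffDerivAt_lOrthogonal_succ {p q : K} {t : 𝕜} {β α : ℕ → K}
    (hν : ∀ k, HasDerivAt (ν k) (todaMomentField p q (ν · t) k) t) (hν0 : ν 0 t ≠ 0)
    (hQ : ∀ s, IsMonicLOrthogonal (ν · s) (Q · s)) (hrec : SatisfiesLRecurrence (Q · t) β α)
    (hα : ∀ n, α (n + 2) ≠ 0) {n : ℕ} (hβ : β (n + 2) ≠ 0)
    (hQdiff : ∀ j, DifferentiableAt 𝕜 (fun s => (Q (n + 1) s).coeff j) t) :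
    HasCoeffDerivAt (Q (n + 1))
      (C (-(q * (α (n + 2) / β (n + 2)))) * Q n t -
        C (p * α (n + 2)) * (Q (n + 1) t - X * Q n t)) t := by
  obtain ⟨Q', hQ'⟩ := exists_hasCoeffDerivAt (fun s => ((hQ s).natDegree_eq (n + 1)).le) hQdiff
  suffices h : Q' - (C (-(q * (α (n + 2) / β (n + 2)))) * Q n t -
      C (p * α (n + 2)) * (Q (n + 1) t - X * Q n t)) = 0 from sub_eq_zero.1 h ▸ hQ'
  refine (hQ t).eq_zero_of_degree_lt
    (hrec.momentFunctional_neg_succ_ne_zero (hQ t) hν0 hα) (n := n + 1) ?_ fun j hj hjn => ?_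
  · have hdeg_deriv : Q'.degree < ((n + 1 : ℕ) : WithBot ℕ) :=
      hQ'.degree_lt_of_monic (fun s => (hQ s).monic _) fun s => (hQ s).natDegree_eq _
    have hdeg_lower : (Q n t).degree < ((n + 1 : ℕ) : WithBot ℕ) :=
      ((hQ t).degree_eq n).trans_lt (Nat.cast_lt.2 n.lt_succ_self)
    have hdeg_sub := (hQ t).degree_sub_X_mul_lt n
    simp only [← mem_degreeLT, ← smul_eq_C_mul] at hdeg_deriv hdeg_lower hdeg_sub ⊢
    exact sub_mem hdeg_deriv
      (sub_mem (Submodule.smul_mem _ _ hdeg_lower) (Submodule.smul_mem _ _ hdeg_sub))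
  · have hminus := hrec.beta_mul_momentFunctional_neg_sub_one (hQ t) hj hjn
    simp only [map_sub, momentFunctional_C_mul, momentFunctional_X_mul]
    rw [hQ'.momentFunctional_neg_of_todaMomentField hν hQ hj hjn,
      (hQ t).momentFunctional_neg_eq_zero hj hjn, hrec.momentFunctional_neg_add_one (hQ t) hj hjn]
    field_simp
    linear_combination q * hminus

theorem hasDerivAt_coeff_zero_lOrthogonal {p q : K} {t : 𝕜} {β α : ℕ → K}
    (hν : ∀ k, HasDerivAt (ν k) (todaMomentField p q (ν · t) k) t) (hν0 : ν 0 t ≠ 0)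
    (hQ : ∀ s, IsMonicLOrthogonal (ν · s) (Q · s)) (hrec : SatisfiesLRecurrence (Q · t) β α)
    (hα1 : α 1 = 0) (hα : ∀ n, α (n + 2) ≠ 0) (hβ : ∀ n, β (n + 1) ≠ 0) (n : ℕ)
    (hQdiff : ∀ j, DifferentiableAt 𝕜 (fun s => (Q n s).coeff j) t) :
    HasDerivAt (fun s => (Q n s).coeff 0)
      ((q * (α (n + 1) / (β (n + 1) * β n)) - p * α (n + 1)) * (Q n t).coeff 0) t := by
  cases n with
  | zero =>
    have hQ0 (s : 𝕜) : Q 0 s = 1 := ((hQ s).monic 0).natDegree_eq_zero.1 ((hQ s).natDegree_eq 0)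
    simpa [hQ0, hα1] using hasDerivAt_const t (1 : K)
  | succ n =>
    have hβ1 := hβ n
    have hβ2 := hβ (n + 1)
    refine (hasCoeffDerivAt_lOrthogonal_succ hν hν0 hQ hrec hα hβ2 hQdiff 0).congr_deriv ?_
    rw [coeff_sub, coeff_C_mul, coeff_C_mul, coeff_sub, coeff_X_mul_zero, hrec.coeff_zero_succ]
    field_simp
    ring

end LOrthogonalFlow

section RelativisticToda

variable {𝕜 K : Type*} [NontriviallyNormedField 𝕜] [NontriviallyNormedField K] [NormedAlgebra 𝕜 K]

theorem hasDerivAt_div_of_hasDerivAt_mul_self {f g : 𝕜 → K} {a b : K} {t : 𝕜}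
    (hf : HasDerivAt f (a * f t) t) (hg : HasDerivAt g (b * g t) t) (hgt : g t ≠ 0) :
    HasDerivAt (fun s => f s / g s) ((a - b) * (f t / g t)) t := by
  refine (hf.fun_div hg hgt).congr_deriv ?_
  field_simp

theorem stmt_0_general {ν : ℤ → 𝕜 → K} {Q : ℕ → 𝕜 → K[X]} {p q : 𝕜 → K} {β α : ℕ → 𝕜 → K}
    (hν : ∀ k t, HasDerivAt (ν k) (todaMomentField (p t) (q t) (ν · t) k) t)
    (hν0 : ∀ t, ν 0 t ≠ 0)
    (hQ : ∀ t, IsMonicLOrthogonal (ν · t) (Q · t))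
    (hQdiff : ∀ n j, Differentiable 𝕜 fun t => (Q n t).coeff j)
    (hrec : ∀ t, SatisfiesLRecurrence (Q · t) (β · t) (α · t))
    (hα1 : ∀ t, α 1 t = 0) (hα : ∀ n t, α (n + 2) t ≠ 0) (hβ : ∀ n t, β n t ≠ 0)
    (n : ℕ) (t : 𝕜) :
    HasDerivAt (β (n + 1))
      (p t * β (n + 1) t * (α (n + 1) t - α (n + 2) t) +
        q t * β (n + 1) t *
          (α (n + 2) t / (β (n + 2) t * β (n + 1) t) -
            α (n + 1) t / (β (n + 1) t * β n t))) t := by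
  have hc (k : ℕ) (s : 𝕜) : (Q k s).coeff 0 ≠ 0 :=
    (hrec s).coeff_zero_ne_zero (fun i => hβ (i + 1) s) k
  have hc_deriv (k : ℕ) : HasDerivAt (fun s => (Q k s).coeff 0)
      ((q t * (α (k + 1) t / (β (k + 1) t * β k t)) - p t * α (k + 1) t) * (Q k t).coeff 0) t :=
    hasDerivAt_coeff_zero_lOrthogonal (fun i => hν i t) (hν0 t) hQ (hrec t) (hα1 t)
      (fun i => hα i t) (fun i => hβ (i + 1) t) k fun j => hQdiff k j t
  have hβ_eq : β (n + 1) = fun s => -((Q (n + 1) s).coeff 0 / (Q n s).coeff 0) := by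
    funext s
    rw [(hrec s).coeff_zero_succ, mul_div_cancel_right₀ _ (hc n s), neg_neg]
  have hderiv :=
    (hasDerivAt_div_of_hasDerivAt_mul_self (hc_deriv (n + 1)) (hc_deriv n) (hc n t)).fun_neg
  rw [← hβ_eq, ← mul_neg, ← congrFun hβ_eq t] at hderiv
  refine hderiv.congr_deriv ?_
  ring

end RelativisticToda

theorem stmt_0 (p q : ℂ) (ν : ℤ → ℝ → ℂ)
    (hνdiff : ∀ k, Differentiable ℝ (ν k))
    (hνderiv : ∀ k t, deriv (ν k) t = -(p * ν (k + 1) t + q * ν (k - 1) t))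
    (hν0 : ∀ t, ν 0 t ≠ 0)
    (Q : ℕ → ℝ → Polynomial ℂ)
    (hQ0 : ∀ t, Q 0 t = 1)
    (hQmonic : ∀ n t, (Q n t).Monic)
    (hQdeg : ∀ n t, (Q n t).natDegree = n)
    (hQdiff : ∀ n j, Differentiable ℝ fun t => (Q n t).coeff j)
    (β α : ℕ → ℝ → ℂ)
    (hβdiff : ∀ n, Differentiable ℝ (β n))
    (hαdiff : ∀ n, Differentiable ℝ (α n))
    (hβ0 : ∀ t, β 0 t = 1) (hα0 : ∀ t, α 0 t = -1) (hα1 : ∀ t, α 1 t = 0)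
    (hβne : ∀ n, 1 ≤ n → ∀ t, β n t ≠ 0)
    (hαne : ∀ n, 1 ≤ n → ∀ t, α (n + 1) t ≠ 0)
    (horth : ∀ n : ℕ, 1 ≤ n → ∀ s < n, ∀ t : ℝ, Lmom ν (-(n : ℤ) + (s : ℤ)) (Q n t) t = 0)
    (hQ1 : ∀ t, Q 1 t = X - C (β 1 t))
    (hrec : ∀ n, 1 ≤ n → ∀ t,
      Q (n + 1) t = (X - C (β (n + 1) t)) * Q n t - C (α (n + 1) t) * (X * Q (n - 1) t)) :
    ∀ n, 1 ≤ n → ∀ t : ℝ,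
      deriv (β n) t =
        p * β n t * (α n t - α (n + 1) t) +
          q * β n t *
            (α (n + 1) t / (β (n + 1) t * β n t) - α n t / (β n t * β (n - 1) t)) := by
  intro n hn t
  obtain ⟨n, rfl⟩ := Nat.exists_eq_add_of_le' hn
  have hν (k t) : HasDerivAt (ν k) (todaMomentField p q (ν · t) k) t :=
    (hνdiff k t).hasDerivAt.congr_deriv (hνderiv k t)
  have hQ (t) : IsMonicLOrthogonal (ν · t) (Q · t) :=
    ⟨(hQmonic · t), (hQdeg · t), fun n s hs =>
      (Lmom_eq_momentFunctional ..).symm.trans (horth n (by omega) s hs t)⟩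
  have hLrec (t) : SatisfiesLRecurrence (Q · t) (β · t) (α · t) :=
    ⟨hQ0 t, hQ1 t, fun n => hrec (n + 1) n.succ_pos t⟩
  have hβ : ∀ n t, β n t ≠ 0
    | 0, t => hβ0 t ▸ one_ne_zero
    | n + 1, t => hβne (n + 1) n.succ_pos t
  exact (stmt_0_general hν hν0 hQ hQdiff hLrec hα1 (fun n => hαne (n + 1) n.succ_pos) hβ n t).deriv
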